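/- For all X, Y, Z ∈ 𝔪 the following matrix identity holds: −2[[X,Y],Z] = −g(Y,Z)X + g(X,Z)Y − g(JY,Z)JX + g(JX,Z)JY + 2g(JX,Y)JZ − g(A₀Y,Z)A₀X + g(A₀X,Z)A₀Y − g(JA₀Y,Z)J(A₀X) + g(JA₀X,Z)J(A₀Y). -/

import Mathlib

open Matrix

/-! An element of `𝔪` is determined by its upper right block, a `2 × m` matrix. If `A, B, C` are the
blocks of `X, Y, Z`, then `J` and `A₀` act by left multiplication with `j = !![0, 1; -1, 0]` and
`k = !![1, 0; 0, -1]`, the form `g(X, Y)` is `tr (Bᵀ A)`, and `[[X, Y], Z]` has the block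
`(A Bᵀ - B Aᵀ) C + C Bᵀ A - C Aᵀ B`. The matrices `1, j, k, jk` form an orthogonal basis of the
`2 × 2` matrices for the trace form, each of squared length `2`. Expanding `C Bᵀ` and `C Aᵀ` in this
basis gives the eight terms antisymmetric in `X` and `Y`, while `A Bᵀ - B Aᵀ` is skew, hence a
multiple of `j`, and gives `2 g(JX, Y) JZ`. -/

lemma eq_zero_of_eq_neg (R : Type*) {M : Type*} [Ring R] [Invertible (2 : R)]
    [AddCommGroup M] [Module R M] {x : M} (h : x = -x) : x = 0 := by
  have two_smul_x : (2 : R) • x = 0 := by rw [two_smul, ← eq_neg_iff_add_eq_zero, ← h]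
  rwa [(isUnit_of_invertible (2 : R)).smul_eq_zero] at two_smul_x

lemma trace_fromBlocks {p q R : Type*} [Fintype p] [Fintype q] [AddCommMonoid R]
    (A : Matrix p p R) (B : Matrix p q R) (C : Matrix q p R) (D : Matrix q q R) :
    (fromBlocks A B C D).trace = A.trace + D.trace := by
  simp [trace, Fintype.sum_sum_type]

section OffDiag

variable {p q R : Type*} [CommRing R]

/-- The symmetric matrix with vanishing diagonal blocks and upper right block `A`. It identifies
`p × q` matrices with the tangent space `𝔪` of the symmetric space of `𝔰𝔬_{p,q}`. -/
def offDiag : Matrix p q R →ₗ[R] Matrix (p ⊕ q) (p ⊕ q) R where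
  toFun A := fromBlocks 0 A Aᵀ 0
  map_add' A B := by simp [fromBlocks_add]
  map_smul' c A := by simp [fromBlocks_smul]

lemma offDiag_apply (A : Matrix p q R) : offDiag A = fromBlocks 0 A Aᵀ 0 := rfl

variable [Fintype p] [Fintype q]

lemma lie_offDiag_offDiag (A B : Matrix p q R) :
    ⁅offDiag A, offDiag B⁆ = fromBlocks (A * Bᵀ - B * Aᵀ) 0 0 (Aᵀ * B - Bᵀ * A) := by
  simp [offDiag_apply, Ring.lie_def, sub_eq_add_neg, fromBlocks_multiply, fromBlocks_neg,
    fromBlocks_add]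

lemma lie_fromBlocks_offDiag {P : Matrix p p R} {Q : Matrix q q R} (hP : Pᵀ = -P) (hQ : Qᵀ = -Q)
    (C : Matrix p q R) : ⁅fromBlocks P 0 0 Q, offDiag C⁆ = offDiag (P * C - C * Q) := by
  simp [offDiag_apply, Ring.lie_def, sub_eq_add_neg, fromBlocks_multiply, fromBlocks_neg,
    fromBlocks_add, hP, hQ, add_comm]

lemma lie_lie_offDiag (A B C : Matrix p q R) :
    ⁅⁅offDiag A, offDiag B⁆, offDiag C⁆ =
      offDiag ((A * Bᵀ - B * Aᵀ) * C - C * (Aᵀ * B - Bᵀ * A)) := by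
  rw [lie_offDiag_offDiag, lie_fromBlocks_offDiag] <;> simp

lemma trace_transpose_offDiag_mul_offDiag (A B : Matrix p q R) :
    ((offDiag B)ᵀ * offDiag A).trace = 2 * (Bᵀ * A).trace := by
  have trace_swap : (B * Aᵀ).trace = (Bᵀ * A).trace := by
    rw [← trace_transpose_mul, transpose_transpose]
  simp [offDiag_apply, fromBlocks_transpose, fromBlocks_multiply, trace_fromBlocks, trace_swap,
    two_mul]

variable [DecidableEq p] [DecidableEq q]

lemma conj_offDiag {u : Matrix p p R} {v : Matrix q q R} (hu : u * uᵀ = 1) (hv : v * vᵀ = 1)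
    (A : Matrix p q R) :
    fromBlocks u 0 0 v * offDiag A * (fromBlocks u 0 0 v)⁻¹ = offDiag (u * A * vᵀ) := by
  have inv_eq : (fromBlocks u 0 0 v)⁻¹ = fromBlocks uᵀ 0 0 vᵀ :=
    inv_eq_right_inv (by simp [fromBlocks_multiply, hu, hv])
  simp [inv_eq, offDiag_apply, fromBlocks_multiply, Matrix.mul_assoc]

lemma setOf_skew_conj_eq_neg_eq_range_offDiag [Invertible (2 : R)]
    {s : Matrix (p ⊕ q) (p ⊕ q) R} (hs : s = fromBlocks (-1) 0 0 1) :
    {X | Xᵀ * s = -(s * X) ∧ s * X * s⁻¹ = -X} = Set.range offDiag := by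
  have inv_s : s⁻¹ = s := inv_eq_right_inv (by simp [hs, fromBlocks_multiply])
  rw [inv_s, hs]
  ext X
  constructor
  · rintro ⟨skew, anti⟩
    rw [← fromBlocks_toBlocks X] at skew anti ⊢
    obtain ⟨-, -, lower_left, -⟩ : _ ∧ _ ∧ X.toBlocks₁₂ᵀ = X.toBlocks₂₁ ∧ _ := by
      simpa [fromBlocks_transpose, fromBlocks_multiply, fromBlocks_neg] using skew
    obtain ⟨upper_left, lower_right⟩ :
        X.toBlocks₁₁ = -X.toBlocks₁₁ ∧ X.toBlocks₂₂ = -X.toBlocks₂₂ := by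
      simpa [fromBlocks_multiply, fromBlocks_neg] using anti
    refine ⟨X.toBlocks₁₂, ?_⟩
    rw [offDiag_apply, lower_left, eq_zero_of_eq_neg R upper_left,
      eq_zero_of_eq_neg R lower_right]
  · rintro ⟨A, rfl⟩
    simp [offDiag_apply, fromBlocks_transpose, fromBlocks_multiply, fromBlocks_neg]

end OffDiag

section TwoByTwo

/-- The block of `j` on `R²`, which induces the complex structure `J`. -/
def quarterTurn (R : Type*) [CommRing R] : Matrix (Fin 2) (Fin 2) R := !![0, 1; -1, 0]

/-- The block of `a₀` on `R²`, which induces the real structure `A₀`. -/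
def axisReflection (R : Type*) [CommRing R] : Matrix (Fin 2) (Fin 2) R := !![1, 0; 0, -1]

variable {R : Type*} [CommRing R]

lemma quarterTurn_mul_transpose : quarterTurn R * (quarterTurn R)ᵀ = 1 := by
  ext i k
  fin_cases i <;> fin_cases k <;> simp [quarterTurn, mul_apply]

lemma axisReflection_mul_transpose : axisReflection R * (axisReflection R)ᵀ = 1 := by
  ext i k
  fin_cases i <;> fin_cases k <;> simp [axisReflection, mul_apply]

lemma two_smul_eq_sum_trace_smul (M : Matrix (Fin 2) (Fin 2) R) :
    (2 : R) • M = M.trace • 1 + ((quarterTurn R)ᵀ * M).trace • quarterTurn R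
      + ((axisReflection R)ᵀ * M).trace • axisReflection R
      + ((quarterTurn R * axisReflection R)ᵀ * M).trace • (quarterTurn R * axisReflection R) := by
  ext i k
  fin_cases i <;> fin_cases k <;>
    simp [quarterTurn, axisReflection, trace_fin_two, mul_apply] <;> ring

lemma sub_transpose_eq_trace_smul_quarterTurn (M : Matrix (Fin 2) (Fin 2) R) :
    M - Mᵀ = (-(quarterTurn R * M).trace) • quarterTurn R := by
  ext i k
  fin_cases i <;> fin_cases k <;>
    simp [quarterTurn, trace_fin_two, vecMul, dotProduct, sub_eq_add_neg]

variable {l n : Type*} [Fintype n]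

lemma two_smul_mul_transpose_mul (C B : Matrix (Fin 2) n R) (A : Matrix (Fin 2) l R) :
    (2 : R) • (C * Bᵀ * A) = (Cᵀ * B).trace • A
      + (Cᵀ * (quarterTurn R * B)).trace • (quarterTurn R * A)
      + (Cᵀ * (axisReflection R * B)).trace • (axisReflection R * A)
      + (Cᵀ * (quarterTurn R * (axisReflection R * B))).trace
          • (quarterTurn R * (axisReflection R * A)) := by
  have trace_eq (u : Matrix (Fin 2) (Fin 2) R) :
      (uᵀ * (C * Bᵀ)).trace = (Cᵀ * (u * B)).trace := by
    calc
      _ = (uᵀ * C * Bᵀ).trace := by rw [Matrix.mul_assoc]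
      _ = ((uᵀ * C * Bᵀ)ᵀ).trace := (trace_transpose _).symm
      _ = (B * (Cᵀ * u)).trace := by simp only [transpose_mul, transpose_transpose]
      _ = (Cᵀ * (u * B)).trace := by rw [trace_mul_comm, Matrix.mul_assoc]
  have trace_one : (C * Bᵀ).trace = (Cᵀ * B).trace := by simpa using trace_eq 1
  rw [← Matrix.smul_mul, two_smul_eq_sum_trace_smul, trace_one]
  simp only [trace_eq, Matrix.add_mul, Matrix.smul_mul, Matrix.one_mul, Matrix.mul_assoc]

lemma mul_transpose_sub_mul_transpose_eq_trace_smul_quarterTurn (A B : Matrix (Fin 2) n R) :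
    A * Bᵀ - B * Aᵀ = (-(Bᵀ * (quarterTurn R * A)).trace) • quarterTurn R := by
  have skew_part := sub_transpose_eq_trace_smul_quarterTurn (A * Bᵀ)
  rwa [transpose_mul, transpose_transpose, ← Matrix.mul_assoc, trace_mul_comm] at skew_part

lemma neg_two_smul_curvature_eq (A B C : Matrix (Fin 2) n R) :
    (-2 : R) • ((A * Bᵀ - B * Aᵀ) * C - C * (Aᵀ * B - Bᵀ * A)) =
      -(Cᵀ * B).trace • A + (Cᵀ * A).trace • B
      - (Cᵀ * (quarterTurn R * B)).trace • (quarterTurn R * A)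
      + (Cᵀ * (quarterTurn R * A)).trace • (quarterTurn R * B)
      + (2 * (Bᵀ * (quarterTurn R * A)).trace) • (quarterTurn R * C)
      - (Cᵀ * (axisReflection R * B)).trace • (axisReflection R * A)
      + (Cᵀ * (axisReflection R * A)).trace • (axisReflection R * B)
      - (Cᵀ * (quarterTurn R * (axisReflection R * B))).trace
          • (quarterTurn R * (axisReflection R * A))
      + (Cᵀ * (quarterTurn R * (axisReflection R * A))).trace
          • (quarterTurn R * (axisReflection R * B)) := by
  calc
    _ = (-2 : R) • ((A * Bᵀ - B * Aᵀ) * C) + (2 : R) • (C * Aᵀ * B) - (2 : R) • (C * Bᵀ * A) := by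
      simp only [Matrix.mul_sub, ← Matrix.mul_assoc]
      module
    _ = _ := by
      rw [mul_transpose_sub_mul_transpose_eq_trace_smul_quarterTurn, Matrix.smul_mul,
        two_smul_mul_transpose_mul C A B, two_smul_mul_transpose_mul C B A]
      module

end TwoByTwo

theorem stmt_7_general {n R : Type*} [Fintype n] [DecidableEq n] [CommRing R] [Invertible (2 : R)]
    (s : Matrix (Fin 2 ⊕ n) (Fin 2 ⊕ n) R) (hs : s = fromBlocks (-1) 0 0 1)
    (mm : Set (Matrix (Fin 2 ⊕ n) (Fin 2 ⊕ n) R))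
    (hmm : mm = {X | Xᵀ * s = -(s * X) ∧ s * X * s⁻¹ = -X})
    (g : Matrix (Fin 2 ⊕ n) (Fin 2 ⊕ n) R → Matrix (Fin 2 ⊕ n) (Fin 2 ⊕ n) R → R)
    (hg : ∀ X Y, g X Y = ⅟2 * (Yᵀ * X).trace)
    (j : Matrix (Fin 2 ⊕ n) (Fin 2 ⊕ n) R) (hj : j = fromBlocks (quarterTurn R) 0 0 1)
    (J : Matrix (Fin 2 ⊕ n) (Fin 2 ⊕ n) R → Matrix (Fin 2 ⊕ n) (Fin 2 ⊕ n) R)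
    (hJ : ∀ X, J X = j * X * j⁻¹)
    (a₀ : Matrix (Fin 2 ⊕ n) (Fin 2 ⊕ n) R) (ha₀ : a₀ = fromBlocks (axisReflection R) 0 0 1)
    (A₀ : Matrix (Fin 2 ⊕ n) (Fin 2 ⊕ n) R → Matrix (Fin 2 ⊕ n) (Fin 2 ⊕ n) R)
    (hA₀ : ∀ X, A₀ X = a₀ * X * a₀⁻¹) :
    ∀ X ∈ mm, ∀ Y ∈ mm, ∀ Z ∈ mm,
      (-2 : R) • ((X * Y - Y * X) * Z - Z * (X * Y - Y * X)) =
        -(g Y Z) • X + (g X Z) • Y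
        - (g (J Y) Z) • J X + (g (J X) Z) • J Y + (2 * g (J X) Y) • J Z
        - (g (A₀ Y) Z) • A₀ X + (g (A₀ X) Z) • A₀ Y
        - (g (J (A₀ Y)) Z) • J (A₀ X) + (g (J (A₀ X)) Z) • J (A₀ Y) := by
  rw [hmm, setOf_skew_conj_eq_neg_eq_range_offDiag hs]
  rintro _ ⟨A, rfl⟩ _ ⟨B, rfl⟩ _ ⟨C, rfl⟩
  have g_offDiag (B C : Matrix (Fin 2) n R) : g (offDiag B) (offDiag C) = (Cᵀ * B).trace := by
    rw [hg, trace_transpose_offDiag_mul_offDiag, invOf_mul_cancel_left']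
  have J_offDiag (A : Matrix (Fin 2) n R) : J (offDiag A) = offDiag (quarterTurn R * A) := by
    simp [hJ, hj, conj_offDiag quarterTurn_mul_transpose]
  have A₀_offDiag (A : Matrix (Fin 2) n R) : A₀ (offDiag A) = offDiag (axisReflection R * A) := by
    simp [hA₀, ha₀, conj_offDiag axisReflection_mul_transpose]
  simp only [J_offDiag, A₀_offDiag, g_offDiag, ← Ring.lie_def, lie_lie_offDiag, ← map_smul,
    ← map_add, ← map_sub, neg_two_smul_curvature_eq]

/-- For all `X, Y, Z ∈ 𝔪` the matrix identity
`−2[[X,Y],Z] = −g(Y,Z)X + g(X,Z)Y − g(JY,Z)JX + g(JX,Z)JY + 2g(JX,Y)JZ − g(A₀Y,Z)A₀X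
+ g(A₀X,Z)A₀Y − g(JA₀Y,Z)J(A₀X) + g(JA₀X,Z)J(A₀Y)` holds. -/
theorem stmt_7 (m : ℕ) (hm : 3 ≤ m)
    (s : Matrix (Fin 2 ⊕ Fin m) (Fin 2 ⊕ Fin m) ℝ)
    (hs : s = Matrix.fromBlocks (-1) 0 0 1)
    (mm : Set (Matrix (Fin 2 ⊕ Fin m) (Fin 2 ⊕ Fin m) ℝ))
    (hmm : mm = {X | Xᵀ * s = -(s * X) ∧ s * X * s⁻¹ = -X})
    (g : Matrix (Fin 2 ⊕ Fin m) (Fin 2 ⊕ Fin m) ℝ →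
         Matrix (Fin 2 ⊕ Fin m) (Fin 2 ⊕ Fin m) ℝ → ℝ)
    (hg : ∀ X Y, g X Y = (1 / 2) * (Yᵀ * X).trace)
    (j : Matrix (Fin 2 ⊕ Fin m) (Fin 2 ⊕ Fin m) ℝ)
    (hj : j = Matrix.fromBlocks !![0, 1; -1, 0] 0 0 1)
    (J : Matrix (Fin 2 ⊕ Fin m) (Fin 2 ⊕ Fin m) ℝ →
         Matrix (Fin 2 ⊕ Fin m) (Fin 2 ⊕ Fin m) ℝ)
    (hJ : ∀ X, J X = j * X * j⁻¹)
    (a₀ : Matrix (Fin 2 ⊕ Fin m) (Fin 2 ⊕ Fin m) ℝ)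
    (ha₀ : a₀ = Matrix.fromBlocks !![1, 0; 0, -1] 0 0 1)
    (A₀ : Matrix (Fin 2 ⊕ Fin m) (Fin 2 ⊕ Fin m) ℝ →
          Matrix (Fin 2 ⊕ Fin m) (Fin 2 ⊕ Fin m) ℝ)
    (hA₀ : ∀ X, A₀ X = a₀ * X * a₀⁻¹) :
    ∀ X ∈ mm, ∀ Y ∈ mm, ∀ Z ∈ mm,
      (-2 : ℝ) • ((X * Y - Y * X) * Z - Z * (X * Y - Y * X)) =
        -(g Y Z) • X + (g X Z) • Y
        - (g (J Y) Z) • J X + (g (J X) Z) • J Y + (2 * g (J X) Y) • J Z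
        - (g (A₀ Y) Z) • A₀ X + (g (A₀ X) Z) • A₀ Y
        - (g (J (A₀ Y)) Z) • J (A₀ X) + (g (J (A₀ X)) Z) • J (A₀ Y) :=
  stmt_7_general s hs mm hmm g (by simpa using hg) j hj J hJ a₀ ha₀ A₀ hA₀
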